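/- arXiv:1510.02572 — 2 statements merged into one kernel-verified Lean document; each statement's English description precedes it below -/
import Mathlib

section
/- Assume the hypotheses of the Weierstrass canonical form and the vanishing-moment condition, with z_j ∉ {λ_1,…,λ_r} for all j; let V, Ṽ ∈ ℂ^{n×L}, define Ŝ_k := Σ_{j=1}^N ω_j z_j^k (z_j B − A)^{-1} B V, μ̂_k := Ṽ^H Ŝ_k, and η := max{n_i : r+1 ≤ i ≤ d} (η := 1 if r = d). Suppose M ≥ 1 satisfies 2M − 1 ≤ N − η. Let Ĥ_M ∈ ℂ^{LM×LM} be the block Hankel matrix whose (i,j) block is μ̂_{i+j−2} and Ĥ_M^< the block Hankel matrix whose (i,j) block is μ̂_{i+j−1} (i,j = 1,…,M). Set Ŝ := [Ŝ_0, Ŝ_1, …, Ŝ_{M−1}] ∈ ℂ^{n×LM} and S̃ := [Ṽ, C^H Ṽ, …, (C^H)^{M−1} Ṽ] ∈ ℂ^{n×LM}. Then Ĥ_M = S̃^H Ŝ and Ĥ_M^< = S̃^H C Ŝ. -/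
noncomputable section
open Matrix

/-- The `n×n` Jordan block with eigenvalue `l`: diagonal entries `l`,
superdiagonal entries `1`, all other entries `0`. -/
def jordanBlock (n : ℕ) (l : ℂ) : Matrix (Fin n) (Fin n) ℂ :=
  Matrix.of fun p q : Fin n =>
    if (q : ℕ) = (p : ℕ) then l else if (q : ℕ) = (p : ℕ) + 1 then 1 else 0

/-- `C := Q_{1:r} J_{1:r} Q̃_{1:r}ᴴ`, where `Q_{1:r}` consists of the columns of `Q`
belonging to the first `r` (Jordan) blocks, `Q̃_{1:r}ᴴ` of the corresponding rows of
`Q⁻¹`, and `J_{1:r} = J_{n_1}(λ_1) ⊕ ⋯ ⊕ J_{n_r}(λ_r)`. -/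
def Cmat (d : ℕ) (ni : Fin d → ℕ) (r : ℕ) (lam : Fin d → ℂ)
    (Q : Matrix ((i : Fin d) × Fin (ni i)) ((i : Fin d) × Fin (ni i)) ℂ) :
    Matrix ((i : Fin d) × Fin (ni i)) ((i : Fin d) × Fin (ni i)) ℂ :=
  Q.submatrix id (Subtype.val : {x : (i : Fin d) × Fin (ni i) // (x.1 : ℕ) < r} → _) *
    (Matrix.blockDiagonal' (fun i => jordanBlock (ni i) (lam i))).submatrix
      (Subtype.val : {x : (i : Fin d) × Fin (ni i) // (x.1 : ℕ) < r} → _) Subtype.val *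
    (Q⁻¹).submatrix (Subtype.val : {x : (i : Fin d) × Fin (ni i) // (x.1 : ℕ) < r} → _) id

/-- `Ŝ_k := ∑_j ω_j z_j^k (z_j B − A)⁻¹ B V`. -/
def Shat {n : Type*} [Fintype n] [DecidableEq n] {L N : ℕ}
    (z omega : Fin N → ℂ) (A B : Matrix n n ℂ) (V : Matrix n (Fin L) ℂ) (k : ℕ) :
    Matrix n (Fin L) ℂ :=
  ∑ j, (omega j * z j ^ k) • ((z j • B - A)⁻¹ * B * V)

/-- `Ŝ := [Ŝ_0, Ŝ_1, …, Ŝ_{M−1}]`, an `n × LM` matrix whose `(j,t)` block column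
entry is the `(·,t)` entry of `Ŝ_j`. -/
def ShatBig {n : Type*} [Fintype n] [DecidableEq n] {L N : ℕ}
    (z omega : Fin N → ℂ) (A B : Matrix n n ℂ) (V : Matrix n (Fin L) ℂ) (M : ℕ) :
    Matrix n (Fin M × Fin L) ℂ :=
  Matrix.of fun x jt => Shat z omega A B V (jt.1 : ℕ) x jt.2

/-- `S̃ := [Ṽ, CᴴṼ, …, (Cᴴ)^{M−1}Ṽ]`. -/
def StildeBig {n : Type*} [Fintype n] [DecidableEq n] {L : ℕ}
    (C : Matrix n n ℂ) (Vt : Matrix n (Fin L) ℂ) (M : ℕ) :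
    Matrix n (Fin M × Fin L) ℂ :=
  Matrix.of fun x is => ((Cᴴ) ^ (is.1 : ℕ) * Vt) x is.2

theorem jb_det_smul_one_sub (n : ℕ) (l z : ℂ) (h : z ≠ l) :
    IsUnit (z • (1 : Matrix (Fin n) (Fin n) ℂ) - jordanBlock n l) := by
  rw [Matrix.isUnit_iff_isUnit_det, Matrix.det_of_upperTriangular]
  · have : ∀ i : Fin n, (z • (1 : Matrix (Fin n) (Fin n) ℂ) - jordanBlock n l) i i = z - l := by
      intro i; simp [jordanBlock]
    simp only [this]
    simp [sub_ne_zero.mpr h]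
  · intro i j hij
    have hij' : (j : ℕ) < i := hij
    have h1 : i ≠ j := by rintro rfl; omega
    have h2 : ¬ (j : ℕ) = i := by omega
    have h3 : ¬ (j : ℕ) = i + 1 := by omega
    simp [jordanBlock, h1, h2, h3]

theorem jb_pow_apply (n k : ℕ) (p q : Fin n) (h : (q : ℕ) < p + k) :
    (jordanBlock n 0 ^ k) p q = 0 := by
  induction k generalizing p q with
  | zero =>
    have h1 : p ≠ q := by rintro rfl; omega
    simp [h1]
  | succ k ih =>
    rw [pow_succ, Matrix.mul_apply]
    apply Finset.sum_eq_zero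
    intro x _
    by_cases hx : (x : ℕ) < p + k
    · rw [ih p x hx, zero_mul]
    · have h3 : ¬ (q : ℕ) = x + 1 := by omega
      simp [jordanBlock, h3]

theorem jb_pow_eq_zero (n k : ℕ) (h : n ≤ k) : jordanBlock n 0 ^ k = 0 := by
  ext p q
  exact jb_pow_apply n k p q (by omega)

theorem nil_unit (n k : ℕ) (h : n ≤ k) (z : ℂ) :
    IsUnit (z • jordanBlock n 0 - 1) := by
  have : IsNilpotent (z • jordanBlock n 0) := ⟨k, by rw [smul_pow, jb_pow_eq_zero n k h, smul_zero]⟩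
  exact this.isUnit_sub_one

/-- Coefficient blocks. -/
def Kblk (m : ℕ) (P : Prop) [Decidable P] (p : ℕ) : Matrix (Fin m) (Fin m) ℂ :=
  if P then (if p = 0 then 1 else 0) else (if p = 0 then 0 else -(jordanBlock m 0 ^ p))

theorem block_identity (m : ℕ) (P : Prop) [Decidable P] (l z : ℂ) (e : ℕ) (he : 1 ≤ e)
    (hP : P → z ≠ l) (hnP : ¬ P → m ≤ e) :
    IsUnit (z • (if P then 1 else jordanBlock m 0) - (if P then jordanBlock m l else 1)) ∧
    ∀ G : Matrix (Fin m) (Fin m) ℂ,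
      (z • (if P then 1 else jordanBlock m 0) - (if P then jordanBlock m l else 1)) * G
        = (if P then 1 else jordanBlock m 0) →
      z • G - (if P then jordanBlock m l else 0) * G
        = ∑ p ∈ Finset.range e, z ^ p • Kblk m P p := by
  obtain ⟨e, rfl⟩ : ∃ e', e = e' + 1 := ⟨e - 1, by omega⟩
  by_cases h : P
  · simp only [h, if_true, Kblk]
    refine ⟨jb_det_smul_one_sub _ _ _ (hP h), ?_⟩
    intro G hG
    rw [Finset.sum_range_succ']
    simp only [Nat.add_eq_zero_iff, one_ne_zero, and_false, if_false, smul_zero,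
      Finset.sum_const_zero, if_true, pow_zero, one_smul, zero_add]
    rw [← hG, sub_mul, smul_mul_assoc, one_mul]
  · simp only [h, if_false, Kblk, zero_mul, sub_zero]
    have hu := nil_unit m (e + 1) (hnP h) z
    refine ⟨hu, ?_⟩
    intro G hG
    apply hu.mul_left_cancel
    rw [mul_smul_comm, hG]
    have hs : ∑ p ∈ Finset.range (e + 1), z ^ p • (if p = 0 then (0 : Matrix (Fin m) (Fin m) ℂ)
        else -(jordanBlock m 0 ^ p))
        = 1 - ∑ p ∈ Finset.range (e + 1), (z • jordanBlock m 0) ^ p := by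
      rw [Finset.sum_range_succ', Finset.sum_range_succ' (fun p => (z • jordanBlock m 0) ^ p)]
      simp [smul_pow]
    rw [hs, mul_sub, mul_geom_sum, smul_pow, jb_pow_eq_zero m _ (hnP h)]
    simp

theorem Cmat_eq (d : ℕ) (ni : Fin d → ℕ) (r : ℕ) (lam : Fin d → ℂ)
    (Q : Matrix ((i : Fin d) × Fin (ni i)) ((i : Fin d) × Fin (ni i)) ℂ) :
    Cmat d ni r lam Q = Q * Matrix.blockDiagonal'
      (fun i : Fin d => if (i : ℕ) < r then jordanBlock (ni i) (lam i) else 0) * Q⁻¹ := by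
  have key : ∀ (f : ((i : Fin d) × Fin (ni i)) → ℂ), (∀ x, ¬ (x.1 : ℕ) < r → f x = 0) →
      ∑ x : {x : (i : Fin d) × Fin (ni i) // (x.1 : ℕ) < r}, f x.1 = ∑ x, f x := by
    intro f hf
    rw [← Finset.sum_subtype (Finset.univ.filter
      (fun x : (i : Fin d) × Fin (ni i) => (x.1 : ℕ) < r)) (by simp) f]
    apply Finset.sum_subset (Finset.subset_univ _)
    intro x _ hx
    exact hf x (by simpa using hx)
  have hb : ∀ x y : (i : Fin d) × Fin (ni i), Matrix.blockDiagonal'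
      (fun i : Fin d => if (i : ℕ) < r then jordanBlock (ni i) (lam i) else 0) x y
      = if (x.1 : ℕ) < r ∧ (y.1 : ℕ) < r then
        Matrix.blockDiagonal' (fun i : Fin d => jordanBlock (ni i) (lam i)) x y else 0 := by
    rintro ⟨i, a⟩ ⟨j, b⟩
    by_cases hij : i = j
    · subst hij
      by_cases h : (i : ℕ) < r <;> simp [Matrix.blockDiagonal'_apply, h]
    · simp [Matrix.blockDiagonal'_apply, hij]
  ext a b
  unfold Cmat
  simp only [Matrix.mul_apply, Matrix.submatrix_apply, id]
  rw [← key]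
  · apply Finset.sum_congr rfl
    rintro ⟨y, hy⟩ _
    congr 1
    rw [← key]
    · apply Finset.sum_congr rfl
      rintro ⟨x, hx⟩ _
      simp [hb, hx, hy]
    · intro x hx
      simp [hb, hx]
  · intro y hy
    simp [hb, hy]

theorem Shat_succ (N : ℕ) (z omega : Fin N → ℂ)
    (hvm : ∀ k : ℕ, k + 2 ≤ N → ∑ j, omega j * z j ^ k = 0)
    (d : ℕ) (ni : Fin d → ℕ) (r : ℕ)
    (lam : Fin d → ℂ)
    (A B Pt Q : Matrix ((i : Fin d) × Fin (ni i)) ((i : Fin d) × Fin (ni i)) ℂ)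
    (hPt : IsUnit Pt) (hQ : IsUnit Q)
    (hA : Ptᴴ * A * Q = Matrix.blockDiagonal'
      (fun i : Fin d => if (i : ℕ) < r then jordanBlock (ni i) (lam i) else 1))
    (hB : Ptᴴ * B * Q = Matrix.blockDiagonal'
      (fun i : Fin d => if (i : ℕ) < r then 1 else jordanBlock (ni i) 0))
    (hzlam : ∀ (j : Fin N) (i : Fin d), (i : ℕ) < r → z j ≠ lam i)
    (L : ℕ) (V : Matrix ((i : Fin d) × Fin (ni i)) (Fin L) ℂ) (e : ℕ) (he : 1 ≤ e)
    (hne : ∀ i : Fin d, ¬ (i : ℕ) < r → ni i ≤ e) (k : ℕ) (hk : k + 1 + e ≤ N) :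
    Shat z omega A B V (k + 1) = Cmat d ni r lam Q * Shat z omega A B V k := by
  have hQd := (Matrix.isUnit_iff_isUnit_det Q).mp hQ
  have hPh : IsUnit Ptᴴ := (Matrix.isUnit_conjTranspose _).mpr hPt
  have hstep : ∀ j, z j • ((z j • B - A)⁻¹ * B) - Cmat d ni r lam Q * ((z j • B - A)⁻¹ * B)
      = ∑ p ∈ Finset.range e, z j ^ p •
        (Q * Matrix.blockDiagonal' (fun i : Fin d => Kblk (ni i) ((i : ℕ) < r) p) * Q⁻¹) := by
    intro j
    have hblk := fun i : Fin d => block_identity (ni i) ((i : ℕ) < r) (lam i) (z j) e he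
      (hzlam j i) (hne i)
    set X : ∀ i : Fin d, Matrix (Fin (ni i)) (Fin (ni i)) ℂ := fun i =>
      z j • (if (i : ℕ) < r then 1 else jordanBlock (ni i) 0)
        - (if (i : ℕ) < r then jordanBlock (ni i) (lam i) else 1) with hX
    set DB : ∀ i : Fin d, Matrix (Fin (ni i)) (Fin (ni i)) ℂ := fun i =>
      (if (i : ℕ) < r then 1 else jordanBlock (ni i) 0) with hDB
    have hXu : ∀ i, X i * (X i)⁻¹ = 1 := fun i =>
      Matrix.mul_nonsing_inv _ ((Matrix.isUnit_iff_isUnit_det _).mp (hblk i).1)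
    have hfull : Ptᴴ * (z j • B - A) * Q = Matrix.blockDiagonal' X := by
      rw [mul_sub, sub_mul, mul_smul_comm, smul_mul_assoc, hA, hB, ← Matrix.blockDiagonal'_smul,
        ← Matrix.blockDiagonal'_sub]
      rfl
    have hXX : Matrix.blockDiagonal' X * Matrix.blockDiagonal' (fun i => (X i)⁻¹) = 1 := by
      rw [← Matrix.blockDiagonal'_mul]
      simp only [hXu]
      exact Matrix.blockDiagonal'_one
    have hu : IsUnit (z j • B - A) := by
      have h1 : IsUnit (Ptᴴ * (z j • B - A) * Q) := by
        rw [hfull]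
        exact IsUnit.of_mul_eq_one _ hXX
      rw [Matrix.isUnit_iff_isUnit_det] at h1 ⊢
      rw [Matrix.det_mul, Matrix.det_mul] at h1
      exact isUnit_of_mul_isUnit_right (isUnit_of_mul_isUnit_left h1)
    have hR : (z j • B - A)⁻¹ * B
        = Q * Matrix.blockDiagonal' (fun i => (X i)⁻¹ * DB i) * Q⁻¹ := by
      apply hu.mul_left_cancel
      rw [← mul_assoc, Matrix.mul_nonsing_inv _ ((Matrix.isUnit_iff_isUnit_det _).mp hu), one_mul]
      apply hPh.mul_left_cancel
      apply hQ.mul_right_cancel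
      rw [hB]
      have : Ptᴴ * ((z j • B - A) * (Q * Matrix.blockDiagonal' (fun i => (X i)⁻¹ * DB i) * Q⁻¹)) * Q
          = (Ptᴴ * (z j • B - A) * Q) * Matrix.blockDiagonal' (fun i => (X i)⁻¹ * DB i)
            * (Q⁻¹ * Q) := by
        simp only [mul_assoc]
      rw [this, hfull, Matrix.nonsing_inv_mul _ hQd, mul_one, ← Matrix.blockDiagonal'_mul]
      simp only [← mul_assoc, hXu, one_mul]
    have hC : Cmat d ni r lam Q * ((z j • B - A)⁻¹ * B) = Q * (Matrix.blockDiagonal'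
        (fun i : Fin d => (if (i : ℕ) < r then jordanBlock (ni i) (lam i) else 0)
          * ((X i)⁻¹ * DB i))) * Q⁻¹ := by
      rw [hR, Cmat_eq, Matrix.blockDiagonal'_mul _ (fun i => (X i)⁻¹ * DB i)]
      have : ∀ S T : Matrix ((i : Fin d) × Fin (ni i)) ((i : Fin d) × Fin (ni i)) ℂ,
          Q * S * Q⁻¹ * (Q * T * Q⁻¹) = Q * S * (Q⁻¹ * Q) * T * Q⁻¹ := by
        intro S T; simp only [mul_assoc]
      rw [this, Matrix.nonsing_inv_mul _ hQd, mul_one]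
      simp only [mul_assoc]
    rw [hC, hR]
    have hsum : ∑ p ∈ Finset.range e, z j ^ p •
        (Q * Matrix.blockDiagonal' (fun i : Fin d => Kblk (ni i) ((i : ℕ) < r) p) * Q⁻¹)
        = Q * (∑ p ∈ Finset.range e, z j ^ p •
          Matrix.blockDiagonal' (fun i : Fin d => Kblk (ni i) ((i : ℕ) < r) p)) * Q⁻¹ := by
      rw [Finset.mul_sum, Finset.sum_mul]
      simp only [mul_smul_comm, smul_mul_assoc]
    rw [hsum, ← smul_mul_assoc, ← mul_smul_comm, ← sub_mul, ← mul_sub]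
    congr 2
    rw [← Matrix.blockDiagonal'_smul, ← Matrix.blockDiagonal'_sub]
    have h2 : ∑ p ∈ Finset.range e, z j ^ p •
          Matrix.blockDiagonal' (fun i : Fin d => Kblk (ni i) ((i : ℕ) < r) p)
        = Matrix.blockDiagonal' (fun i : Fin d => ∑ p ∈ Finset.range e,
            z j ^ p • Kblk (ni i) ((i : ℕ) < r) p) := by
      ext ⟨i, a⟩ ⟨i', b⟩
      simp only [Matrix.sum_apply, Matrix.smul_apply, Matrix.blockDiagonal'_apply]
      split_ifs with h
      · subst h
        simp [Matrix.sum_apply]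
      · simp
    rw [h2]
    congr 1
    funext i
    exact (hblk i).2 _ (by rw [← mul_assoc]; exact (by rw [hXu, one_mul]))
  rw [← sub_eq_zero]
  unfold Shat
  rw [Matrix.mul_sum, ← Finset.sum_sub_distrib]
  have h3 : ∀ j, (omega j * z j ^ (k + 1)) • ((z j • B - A)⁻¹ * B * V)
      - Cmat d ni r lam Q * ((omega j * z j ^ k) • ((z j • B - A)⁻¹ * B * V))
      = ∑ p ∈ Finset.range e, (omega j * z j ^ (k + p)) •
        (Q * Matrix.blockDiagonal' (fun i : Fin d => Kblk (ni i) ((i : ℕ) < r) p) * Q⁻¹ * V) := by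
    intro j
    have := congrArg (fun T => (omega j * z j ^ k) • (T * V)) (hstep j)
    simp only [Matrix.sub_mul, Matrix.sum_mul, smul_sub, Finset.smul_sum, Matrix.smul_mul,
      smul_smul] at this
    rw [Matrix.mul_smul, ← Matrix.mul_assoc, pow_succ, ← mul_assoc, this]
    apply Finset.sum_congr rfl
    intro p _
    rw [pow_add, mul_assoc]
  simp only [h3]
  rw [Finset.sum_comm]
  apply Finset.sum_eq_zero
  intro p hp
  rw [← Finset.sum_smul, hvm (k + p) (by have := Finset.mem_range.mp hp; omega), zero_smul]

/-- under the Weierstrass canonical form, the vanishing-moment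
condition and `2M − 1 ≤ N − η`, the block Hankel matrices built from the moments
`μ̂_k = Ṽᴴ Ŝ_k` satisfy `Ĥ_M = S̃ᴴ Ŝ` and `Ĥ_M^< = S̃ᴴ C Ŝ`. -/
theorem stmt_7 (N : ℕ) (z omega : Fin N → ℂ)
    (hvm : ∀ k : ℕ, k + 2 ≤ N → ∑ j, omega j * z j ^ k = 0)
    (d : ℕ) (ni : Fin d → ℕ) (hni : ∀ i, 1 ≤ ni i) (r : ℕ) (hr : r ≤ d)
    (lam : Fin d → ℂ)
    (A B Pt Q : Matrix ((i : Fin d) × Fin (ni i)) ((i : Fin d) × Fin (ni i)) ℂ)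
    (hPt : IsUnit Pt) (hQ : IsUnit Q)
    (hA : Ptᴴ * A * Q = Matrix.blockDiagonal'
      (fun i : Fin d => if (i : ℕ) < r then jordanBlock (ni i) (lam i) else 1))
    (hB : Ptᴴ * B * Q = Matrix.blockDiagonal'
      (fun i : Fin d => if (i : ℕ) < r then 1 else jordanBlock (ni i) 0))
    (hzlam : ∀ (j : Fin N) (i : Fin d), (i : ℕ) < r → z j ≠ lam i)
    (L : ℕ) (V Vt : Matrix ((i : Fin d) × Fin (ni i)) (Fin L) ℂ)
    (M : ℕ) (hM : 1 ≤ M)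
    (hMN : 2 * M - 1 + ((Finset.univ.filter (fun i : Fin d => r ≤ (i : ℕ))).sup ni ⊔ 1) ≤ N) :
    (Matrix.of fun is jt : Fin M × Fin L =>
        (Vtᴴ * Shat z omega A B V ((is.1 : ℕ) + (jt.1 : ℕ))) is.2 jt.2) =
      (StildeBig (Cmat d ni r lam Q) Vt M)ᴴ * ShatBig z omega A B V M ∧
    (Matrix.of fun is jt : Fin M × Fin L =>
        (Vtᴴ * Shat z omega A B V ((is.1 : ℕ) + (jt.1 : ℕ) + 1)) is.2 jt.2) =
      (StildeBig (Cmat d ni r lam Q) Vt M)ᴴ *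
        (Cmat d ni r lam Q * ShatBig z omega A B V M) := by
  set e := ((Finset.univ.filter (fun i : Fin d => r ≤ (i : ℕ))).sup ni ⊔ 1) with hedef
  have he : 1 ≤ e := le_sup_right
  have hne : ∀ i : Fin d, ¬ (i : ℕ) < r → ni i ≤ e := by
    intro i hi
    refine le_trans ?_ le_sup_left
    exact Finset.le_sup (f := ni) (by simpa using hi)
  have hs := Shat_succ N z omega hvm d ni r lam A B Pt Q hPt hQ hA hB hzlam L V e he hne
  set C := Cmat d ni r lam Q with hC
  have hpow : ∀ i k : ℕ, i + k + e ≤ N → Shat z omega A B V (i + k)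
      = C ^ i * Shat z omega A B V k := by
    intro i
    induction i with
    | zero => intro k _; simp
    | succ i ih =>
      intro k hk
      rw [show i + 1 + k = i + k + 1 by ring, hs (i + k) (by omega), ih k (by omega),
        ← Matrix.mul_assoc, pow_succ']
  have hS : ∀ (X : Matrix ((i : Fin d) × Fin (ni i)) (Fin M × Fin L) ℂ) is jt,
      ((StildeBig C Vt M)ᴴ * X) is jt
        = (Vtᴴ * (C ^ (is.1 : ℕ) * X)) is.2 jt := by
    intro X is jt
    have h1 : ((StildeBig C Vt M)ᴴ * X) is jt
        = (((Cᴴ ^ (is.1 : ℕ) * Vt)ᴴ) * X) is.2 jt := by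
      rfl
    rw [h1, Matrix.conjTranspose_mul, Matrix.conjTranspose_pow, Matrix.conjTranspose_conjTranspose,
      Matrix.mul_assoc]
  have hcol : ∀ (Y : Matrix (Fin L) ((i : Fin d) × Fin (ni i)) ℂ) s (jt : Fin M × Fin L),
      (Y * ShatBig z omega A B V M) s jt = (Y * Shat z omega A B V (jt.1 : ℕ)) s jt.2 := by
    intro Y s jt
    simp [Matrix.mul_apply, ShatBig]
  constructor
  · ext is jt
    have h1 := is.1.2
    have h2 := jt.1.2
    rw [hS, Matrix.of_apply, hpow _ _ (by omega), ← Matrix.mul_assoc, ← Matrix.mul_assoc, hcol]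
  · ext is jt
    have h1 := is.1.2
    have h2 := jt.1.2
    rw [hS, Matrix.of_apply, show (is.1 : ℕ) + (jt.1 : ℕ) + 1 = (is.1 + 1 : ℕ) + jt.1 by ring,
      hpow _ _ (by omega), pow_succ, ← Matrix.mul_assoc, ← Matrix.mul_assoc, ← Matrix.mul_assoc,
      ← Matrix.mul_assoc, hcol]
end
end

section
/- Suppose the quadrature nodes and weights satisfy the vanishing-moment condition. Then for every integer n ≥ 1 and every integer k with 0 ≤ k ≤ N − n, one has Σ_{j=1}^N ω_j z_j^k (z_j J_n(0) − I_n)^{-1} J_n(0) = O (the n×n zero matrix). -/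
noncomputable section
open Matrix

theorem jordanBlock_pow_apply (n m : ℕ) : ∀ p q : Fin n, (q : ℕ) < (p : ℕ) + m →
    (jordanBlock n 0 ^ m) p q = 0 := by
  induction m with
  | zero =>
    intro p q h
    rw [pow_zero, Matrix.one_apply_ne]
    rintro rfl
    omega
  | succ m ih =>
    intro p q h
    rw [pow_succ, Matrix.mul_apply]
    refine Finset.sum_eq_zero fun r _ => ?_
    by_cases hr : (r : ℕ) < (p : ℕ) + m
    · rw [ih p r hr, zero_mul]
    · have h1 : (q : ℕ) ≠ (r : ℕ) + 1 := by omega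
      simp [jordanBlock, h1]

theorem jordanBlock_pow_self (n : ℕ) : jordanBlock n 0 ^ n = 0 := by
  ext p q
  exact jordanBlock_pow_apply n n p q (by omega)

theorem jordanBlock_resolvent (n : ℕ) (z : ℂ) :
    (z • jordanBlock n 0 - (1 : Matrix (Fin n) (Fin n) ℂ))⁻¹ =
      -∑ m ∈ Finset.range n, (z • jordanBlock n 0) ^ m := by
  apply Matrix.inv_eq_left_inv
  rw [neg_mul, geom_sum_mul, smul_pow, jordanBlock_pow_self]
  simp

/-- under the vanishing-moment condition, for every `n ≥ 1` and
`0 ≤ k ≤ N − n`, `∑_j ω_j z_j^k (z_j J_n(0) − I_n)⁻¹ J_n(0) = O`. -/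
theorem stmt_9 (N : ℕ) (z omega : Fin N → ℂ)
    (hvm : ∀ k : ℕ, k + 2 ≤ N → ∑ j, omega j * z j ^ k = 0)
    (n : ℕ) (hn : 1 ≤ n) (k : ℕ) (hk : k + n ≤ N) :
    ∑ j, (omega j * z j ^ k) •
        ((z j • jordanBlock n 0 - (1 : Matrix (Fin n) (Fin n) ℂ))⁻¹ * jordanBlock n 0) =
      (0 : Matrix (Fin n) (Fin n) ℂ) := by
  obtain ⟨d, rfl⟩ : ∃ d, n = d + 1 := ⟨n - 1, by omega⟩
  have key : ∀ j, (omega j * z j ^ k) •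
      ((z j • jordanBlock (d + 1) 0 - (1 : Matrix (Fin (d + 1)) (Fin (d + 1)) ℂ))⁻¹ *
        jordanBlock (d + 1) 0) =
      ∑ m ∈ Finset.range d,
        (-(omega j * z j ^ (k + m))) • jordanBlock (d + 1) 0 ^ (m + 1) := by
    intro j
    rw [jordanBlock_resolvent, neg_mul, Finset.sum_mul, Finset.sum_range_succ, smul_pow (z j) _ d,
      smul_mul_assoc, ← pow_succ, jordanBlock_pow_self, smul_zero, add_zero, smul_neg,
      Finset.smul_sum, ← Finset.sum_neg_distrib]
    refine Finset.sum_congr rfl fun m _ => ?_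
    rw [smul_pow, smul_mul_assoc, ← pow_succ, smul_smul, neg_smul, pow_add (z j), mul_assoc]
  rw [Finset.sum_congr rfl fun j _ => key j, Finset.sum_comm]
  refine Finset.sum_eq_zero fun m hm => ?_
  have hm' := Finset.mem_range.mp hm
  rw [← Finset.sum_smul, Finset.sum_neg_distrib, hvm (k + m) (by omega), neg_zero, zero_smul]
end
end
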